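/- Let f : ℝ^d → ℝ be twice continuously differentiable with L_H-Lipschitz continuous Hessian (L_H > 0). Let x ∈ ℝ^d, S ∈ ℝ^{l×d}, ŝ ∈ ℝ^l with s := Sᵀŝ ≠ 0, let θ ∈ (0,1), and let 0 < α ≤ 2(1−θ)/L_H. If f(x) − q̂(ŝ) ≥ (1/(3α))·‖s‖³, then f(x) − f(x + s) ≥ θ·( f(x) − q̂(ŝ) ). -/

import Mathlib

open scoped BigOperators NNReal
open MeasureTheory ProbabilityTheory

namespace RARC

noncomputable def enorm {n : ℕ} (v : Fin n → ℝ) : ℝ := Real.sqrt (∑ i, v i ^ 2)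

noncomputable def opNorm {m n : ℕ} (S : Matrix (Fin m) (Fin n) ℝ) : ℝ :=
  sSup {c : ℝ | ∃ v : Fin n → ℝ, enorm v = 1 ∧ c = enorm (S.mulVec v)}

noncomputable def grad {n : ℕ} (f : (Fin n → ℝ) → ℝ) (x : Fin n → ℝ) : Fin n → ℝ :=
  fun i => fderiv ℝ f x (Pi.single i 1)

noncomputable def hess {n : ℕ} (f : (Fin n → ℝ) → ℝ) (x : Fin n → ℝ) :
    Matrix (Fin n) (Fin n) ℝ :=
  Matrix.of fun i j =>
    fderiv ℝ (fun y => fderiv ℝ f y (Pi.single j 1)) x (Pi.single i 1)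

noncomputable def qhat {d l : ℕ} (f : (Fin d → ℝ) → ℝ) (x : Fin d → ℝ)
    (S : Matrix (Fin l) (Fin d) ℝ) (s : Fin l → ℝ) : ℝ :=
  f x + (∑ i, S.mulVec (grad f x) i * s i)
    + (1/2) * (∑ i, s i * (S * hess f x * S.transpose).mulVec s i)

noncomputable def mhat {d l : ℕ} (f : (Fin d → ℝ) → ℝ) (x : Fin d → ℝ)
    (S : Matrix (Fin l) (Fin d) ℝ) (α : ℝ) (s : Fin l → ℝ) : ℝ :=
  qhat f x S s + (1/(3*α)) * enorm (S.transpose.mulVec s) ^ 3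

noncomputable def lambdaMin {n : ℕ} (A : Matrix (Fin n) (Fin n) ℝ) : ℝ :=
  sInf {t : ℝ | ∃ v : Fin n → ℝ, enorm v = 1 ∧ t = ∑ i, v i * A.mulVec v i}

def LipschitzHessian {n : ℕ} (f : (Fin n → ℝ) → ℝ) (L : ℝ) : Prop :=
  ∀ x y : Fin n → ℝ, opNorm (hess f y - hess f x) ≤ L * enorm (y - x)

noncomputable def augM {d : ℕ} (f : (Fin d → ℝ) → ℝ) (x : Fin d → ℝ) :
    Matrix (Fin d) (Fin (d+1)) ℝ :=
  Matrix.of fun i j => Fin.cases (grad f x i) (fun j' => hess f x i j') j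

noncomputable def gaussVec (l : ℕ) : Measure (Fin l → ℝ) :=
  Measure.pi fun _ => gaussianReal 0 (l : ℝ≥0)⁻¹

noncomputable def scaledGaussian (l d : ℕ) : Measure (Fin l → Fin d → ℝ) :=
  Measure.pi fun _ : Fin l => Measure.pi fun _ : Fin d => gaussianReal 0 (l : ℝ≥0)⁻¹

/-!
Restricting `f` to the segment from `x` to `x + s` turns the Lipschitz condition on the Hessian
into `φ''(t) - φ''(0) ≤ L ‖s‖³ t`, and two integrations give `f (x + s) ≤ q(s) + L ‖s‖³ / 6`,
where `q` is the quadratic Taylor model of `f` at `x`. The assumed model decrease says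
`‖s‖³ ≤ 3 α (f x - q(s))`, so the Taylor error is at most the fraction `α L / 2 ≤ 1 - θ` of the
model decrease. Sketching enters only through `s = Sᵀŝ`, as `q̂(ŝ) = q(Sᵀŝ)`.
-/

section Taylor

variable {φ φ' φ'' : ℝ → ℝ} {M b : ℝ}

theorem le_of_hasDerivAt_le {ψ ψ' : ℝ → ℝ} {a b : ℝ}
    (hφ : ∀ t ∈ Set.Icc a b, HasDerivAt φ (φ' t) t)
    (hψ : ∀ t ∈ Set.Icc a b, HasDerivAt ψ (ψ' t) t)
    (ha : φ a ≤ ψ a) (hle : ∀ t ∈ Set.Ico a b, φ' t ≤ ψ' t) :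
    ∀ t ∈ Set.Icc a b, φ t ≤ ψ t :=
  image_le_of_deriv_right_le_deriv_boundary (HasDerivAt.continuousOn hφ)
    (fun t ht ↦ (hφ t (Set.Ico_subset_Icc_self ht)).hasDerivWithinAt) ha
    (HasDerivAt.continuousOn hψ)
    (fun t ht ↦ (hψ t (Set.Ico_subset_Icc_self ht)).hasDerivWithinAt) hle

theorem le_quadratic_of_deriv_sub_le (hφ : ∀ t ∈ Set.Icc 0 b, HasDerivAt φ (φ' t) t)
    (hM : ∀ t ∈ Set.Ico 0 b, φ' t - φ' 0 ≤ M * t) :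
    ∀ t ∈ Set.Icc 0 b, φ t ≤ φ 0 + φ' 0 * t + M / 2 * t ^ 2 := by
  refine le_of_hasDerivAt_le (ψ' := fun t ↦ φ' 0 + M * t) hφ (fun t _ ↦ ?_) (by simp)
    fun t ht ↦ by linarith [hM t ht]
  exact (((hasDerivAt_id t).const_mul (φ' 0)).const_add (φ 0)).add
    ((hasDerivAt_pow 2 t).const_mul (M / 2)) |>.congr_deriv (by norm_num; ring)

theorem le_cubic_of_deriv2_sub_le (hφ : ∀ t ∈ Set.Icc 0 b, HasDerivAt φ (φ' t) t)
    (hφ' : ∀ t ∈ Set.Icc 0 b, HasDerivAt φ' (φ'' t) t)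
    (hM : ∀ t ∈ Set.Ico 0 b, φ'' t - φ'' 0 ≤ M * t) :
    ∀ t ∈ Set.Icc 0 b, φ t ≤ φ 0 + φ' 0 * t + φ'' 0 / 2 * t ^ 2 + M / 6 * t ^ 3 := by
  have hφ'_le := le_quadratic_of_deriv_sub_le hφ' hM
  refine le_of_hasDerivAt_le (ψ' := fun t ↦ φ' 0 + φ'' 0 * t + M / 2 * t ^ 2) hφ (fun t _ ↦ ?_)
    (by simp) fun t ht ↦ hφ'_le t (Set.Ico_subset_Icc_self ht)
  exact ((((hasDerivAt_id t).const_mul (φ' 0)).const_add (φ 0)).add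
    ((hasDerivAt_pow 2 t).const_mul (φ'' 0 / 2))).add
    ((hasDerivAt_pow 3 t).const_mul (M / 6)) |>.congr_deriv (by norm_num; ring)

end Taylor

section NormedSpace

variable {E : Type*} [NormedAddCommGroup E] [NormedSpace ℝ E]
  {f : E → ℝ} {f' : E → E →L[ℝ] ℝ} {f'' : E → E →L[ℝ] E →L[ℝ] ℝ} {x s : E} {L : ℝ}

/-- The second-order Taylor model at `x` of a function `f` with first and second derivatives `f'`
and `f''`, evaluated at the step `s`. -/
noncomputable def quadraticModel (f : E → ℝ) (f' : E → E →L[ℝ] ℝ) (f'' : E → E →L[ℝ] E →L[ℝ] ℝ)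
    (x s : E) : ℝ :=
  f x + f' x s + (1 / 2) * f'' x s s

theorem le_quadraticModel_add_of_segment {M : ℝ} (hf : ∀ y, HasFDerivAt f (f' y) y)
    (hf' : ∀ y, HasFDerivAt f' (f'' y) y)
    (hM : ∀ t ∈ Set.Ico (0 : ℝ) 1, f'' (x + t • s) s s - f'' x s s ≤ M * t) :
    f (x + s) ≤ quadraticModel f f' f'' x s + M / 6 := by
  have hline (t : ℝ) : HasDerivAt (fun t : ℝ ↦ x + t • s) s t := by
    simpa using ((hasDerivAt_id t).smul_const s).const_add x
  have hφ (t : ℝ) : HasDerivAt (fun t : ℝ ↦ f (x + t • s)) (f' (x + t • s) s) t :=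
    (hf _).comp_hasDerivAt t (hline t)
  have hφ' (t : ℝ) : HasDerivAt (fun t : ℝ ↦ f' (x + t • s) s) (f'' (x + t • s) s s) t :=
    (ContinuousLinearMap.apply ℝ ℝ s).hasFDerivAt.comp_hasDerivAt t
      ((hf' _).comp_hasDerivAt t (hline t))
  have hcubic := le_cubic_of_deriv2_sub_le (b := 1) (fun t _ ↦ hφ t) (fun t _ ↦ hφ' t)
    (by simpa using hM) 1 (Set.right_mem_Icc.2 zero_le_one)
  simp only [zero_smul, one_smul, add_zero] at hcubic
  rw [quadraticModel]
  linarith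

theorem le_quadraticModel_add_cube (p : Seminorm ℝ E) (hf : ∀ y, HasFDerivAt f (f' y) y)
    (hf' : ∀ y, HasFDerivAt f' (f'' y) y)
    (hLip : ∀ y v, f'' y v v - f'' x v v ≤ L * p (y - x) * p v ^ 2) :
    f (x + s) ≤ quadraticModel f f' f'' x s + L / 6 * p s ^ 3 := by
  have hseg : ∀ t ∈ Set.Ico (0 : ℝ) 1,
      f'' (x + t • s) s s - f'' x s s ≤ L * p s ^ 3 * t := fun t ht ↦ calc
    _ ≤ L * p (t • s) * p s ^ 2 := by simpa using hLip (x + t • s) s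
    _ = L * p s ^ 3 * t := by
      rw [map_smul_eq_mul, Real.norm_of_nonneg ht.1]
      ring
  linarith [le_quadraticModel_add_of_segment hf hf' hseg]

theorem stmt3_general (p : Seminorm ℝ E) {θ α : ℝ} (hL : 0 ≤ L) (hα : 0 < α)
    (hαL : α * L ≤ 2 * (1 - θ)) (hf : ∀ y, HasFDerivAt f (f' y) y)
    (hf' : ∀ y, HasFDerivAt f' (f'' y) y)
    (hLip : ∀ y v, f'' y v v - f'' x v v ≤ L * p (y - x) * p v ^ 2)
    (hdecr : f x - quadraticModel f f' f'' x s ≥ (1 / (3 * α)) * p s ^ 3) :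
    f x - f (x + s) ≥ θ * (f x - quadraticModel f f' f'' x s) := by
  set D := f x - quadraticModel f f' f'' x s with hD
  have htaylor := le_quadraticModel_add_cube (s := s) p hf hf' hLip
  have hstep : p s ^ 3 ≤ 3 * α * D := by
    rwa [ge_iff_le, one_div, inv_mul_le_iff₀ (by positivity)] at hdecr
  have hD_nonneg : 0 ≤ D := le_trans (by positivity) hdecr
  have herror : L / 6 * p s ^ 3 ≤ (1 - θ) * D := calc
    L / 6 * p s ^ 3 ≤ L / 6 * (3 * α * D) := by gcongr
    _ = α * L / 2 * D := by ring
    _ ≤ (1 - θ) * D := by gcongr; linarith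
  linarith

end NormedSpace

section Euclidean

open WithLp
open scoped Matrix Matrix.Norms.L2Operator

variable {m n : ℕ}

theorem enorm_eq_norm_toLp (v : Fin n → ℝ) : enorm v = ‖toLp 2 v‖ := by
  simp [enorm, EuclideanSpace.norm_eq]

variable (n) in
/-- The Euclidean norm `enorm` as a seminorm on `Fin n → ℝ`, whose own norm is the sup norm. -/
noncomputable def enormSeminorm : Seminorm ℝ (Fin n → ℝ) :=
  (normSeminorm ℝ (EuclideanSpace ℝ (Fin n))).comp
    (WithLp.linearEquiv 2 ℝ (Fin n → ℝ)).symm.toLinearMap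

theorem enormSeminorm_apply (v : Fin n → ℝ) : enormSeminorm n v = enorm v :=
  (enorm_eq_norm_toLp v).symm

theorem opNorm_eq_l2_opNorm (A : Matrix (Fin m) (Fin n) ℝ) : opNorm A = ‖A‖ := by
  rw [Matrix.l2_opNorm_def, ← ContinuousLinearMap.sSup_sphere_eq_norm, opNorm]
  congr 1
  ext c
  constructor
  · rintro ⟨v, hv, rfl⟩
    exact ⟨toLp 2 v, by simpa [← enorm_eq_norm_toLp] using hv, (enorm_eq_norm_toLp _).symm⟩
  · rintro ⟨v, hv, rfl⟩
    exact ⟨ofLp v, by simpa [enorm_eq_norm_toLp] using hv, (enorm_eq_norm_toLp _).symm⟩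

theorem dotProduct_mulVec_le_opNorm (A : Matrix (Fin m) (Fin n) ℝ) (v : Fin m → ℝ)
    (w : Fin n → ℝ) : v ⬝ᵥ A *ᵥ w ≤ opNorm A * enorm v * enorm w := by
  simp only [opNorm_eq_l2_opNorm, enorm_eq_norm_toLp]
  calc v ⬝ᵥ A *ᵥ w
      = inner ℝ (toLp 2 v) (toLp 2 (A *ᵥ w)) := by
        rw [EuclideanSpace.inner_toLp_toLp, star_trivial, dotProduct_comm]
    _ ≤ ‖toLp 2 v‖ * ‖toLp 2 (A *ᵥ w)‖ := real_inner_le_norm _ _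
    _ ≤ ‖toLp 2 v‖ * (‖A‖ * ‖toLp 2 w‖) := by
        gcongr
        exact A.l2_opNorm_mulVec (toLp 2 w)
    _ = ‖A‖ * ‖toLp 2 v‖ * ‖toLp 2 w‖ := by ring

end Euclidean

section Derivatives

open scoped Matrix

variable {d l : ℕ} {f : (Fin d → ℝ) → ℝ} {x : Fin d → ℝ}

theorem apply_eq_sum_smul_apply_single {ι R M T : Type*} [Fintype ι] [DecidableEq ι] [Semiring R]
    [AddCommMonoid M] [Module R M] [FunLike T (ι → R) M] [LinearMapClass T R (ι → R) M]
    (φ : T) (v : ι → R) : φ v = ∑ i, v i • φ (Pi.single i 1) := by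
  conv_lhs => rw [pi_eq_sum_univ' v]
  simp only [map_sum, map_smul]

theorem dotProduct_grad (f : (Fin d → ℝ) → ℝ) (x v : Fin d → ℝ) :
    v ⬝ᵥ grad f x = fderiv ℝ f x v :=
  (apply_eq_sum_smul_apply_single (fderiv ℝ f x) v).symm

theorem hess_apply (hf : DifferentiableAt ℝ (fderiv ℝ f) x) (i j : Fin d) :
    hess f x i j = fderiv ℝ (fderiv ℝ f) x (Pi.single i 1) (Pi.single j 1) := by
  simp [hess, fderiv_clm_apply hf (differentiableAt_const _)]

theorem dotProduct_hess_mulVec (hf : DifferentiableAt ℝ (fderiv ℝ f) x) (u v : Fin d → ℝ) :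
    u ⬝ᵥ hess f x *ᵥ v = fderiv ℝ (fderiv ℝ f) x u v := by
  have hrow (i : Fin d) :
      (hess f x *ᵥ v) i = fderiv ℝ (fderiv ℝ f) x (Pi.single i 1) v := by
    rw [apply_eq_sum_smul_apply_single _ v]
    simp [Matrix.mulVec, dotProduct, hess_apply hf, mul_comm]
  rw [apply_eq_sum_smul_apply_single _ u]
  simp [dotProduct, hrow]

theorem LipschitzHessian.fderiv_fderiv_sub_le {L : ℝ} (hLip : LipschitzHessian f L)
    (hf : Differentiable ℝ (fderiv ℝ f)) (x y v : Fin d → ℝ) :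
    fderiv ℝ (fderiv ℝ f) y v v - fderiv ℝ (fderiv ℝ f) x v v
      ≤ L * enorm (y - x) * enorm v ^ 2 := calc
  _ = v ⬝ᵥ (hess f y - hess f x) *ᵥ v := by
    rw [Matrix.sub_mulVec, dotProduct_sub, dotProduct_hess_mulVec (hf y),
      dotProduct_hess_mulVec (hf x)]
  _ ≤ opNorm (hess f y - hess f x) * enorm v ^ 2 := by
    simpa only [pow_two, mul_assoc] using dotProduct_mulVec_le_opNorm _ v v
  _ ≤ L * enorm (y - x) * enorm v ^ 2 := by
    gcongr
    exact hLip x y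

theorem qhat_eq_quadraticModel (hf : DifferentiableAt ℝ (fderiv ℝ f) x)
    (S : Matrix (Fin l) (Fin d) ℝ) (sh : Fin l → ℝ) :
    qhat f x S sh
      = quadraticModel f (fderiv ℝ f) (fderiv ℝ (fderiv ℝ f)) x (S.transpose.mulVec sh) := by
  have hlin : (S *ᵥ grad f x) ⬝ᵥ sh = fderiv ℝ f x (Sᵀ *ᵥ sh) := by
    rw [← dotProduct_grad, dotProduct_comm, Matrix.dotProduct_mulVec, Matrix.mulVec_transpose]
  have hquad : sh ⬝ᵥ (S * hess f x * Sᵀ) *ᵥ sh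
      = fderiv ℝ (fderiv ℝ f) x (Sᵀ *ᵥ sh) (Sᵀ *ᵥ sh) := by
    rw [← dotProduct_hess_mulVec hf, ← Matrix.mulVec_mulVec, ← Matrix.mulVec_mulVec,
      Matrix.dotProduct_mulVec, ← Matrix.mulVec_transpose]
  rw [quadraticModel, ← hlin, ← hquad]
  rfl

end Derivatives

theorem stmt3 {d l : ℕ} (L_H θ α : ℝ) (hLH : 0 < L_H) (hθ : θ ∈ Set.Ioo (0:ℝ) 1)
    (hα : 0 < α) (hα2 : α ≤ 2 * (1 - θ) / L_H)
    (f : (Fin d → ℝ) → ℝ) (hf : ContDiff ℝ 2 f) (hLip : LipschitzHessian f L_H)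
    (x : Fin d → ℝ) (S : Matrix (Fin l) (Fin d) ℝ) (sh : Fin l → ℝ)
    (hs : S.transpose.mulVec sh ≠ 0)
    (hdecr : f x - qhat f x S sh ≥ (1/(3*α)) * enorm (S.transpose.mulVec sh) ^ 3) :
    f x - f (x + S.transpose.mulVec sh) ≥ θ * (f x - qhat f x S sh) := by
  have hf' : Differentiable ℝ (fderiv ℝ f) :=
    (hf.fderiv_right (m := 1) (by norm_num)).differentiable (by norm_num)
  rw [qhat_eq_quadraticModel (hf' x)] at hdecr ⊢
  exact stmt3_general (enormSeminorm d) hLH.le hα ((le_div_iff₀ hLH).1 hα2)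
    (fun y ↦ (hf.differentiable (by norm_num) y).hasFDerivAt) (fun y ↦ (hf' y).hasFDerivAt)
    (fun y v ↦ by simpa only [enormSeminorm_apply] using hLip.fderiv_fderiv_sub_le hf' x y v)
    (by simpa only [enormSeminorm_apply] using hdecr)

end RARC
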